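/- Let 𝒢_imp = (𝒢, ∼) be an imperfect-information arena defining a game with opacity condition with secret set S ⊆ V₁ marked by the atomic proposition p_S. A strategy σ for Alice (Player 2) is winning (i.e., every π ∈ out(σ) is winning for Alice) if and only if σ is (≈, G ¬ R p_S)-fully-uniform. -/

import Mathlib

namespace UniformStrategies

variable {V AP : Type}

/-- A two-player turn-based arena. -/
structure Arena (V : Type) (AP : Type) where
  V1 : Set V
  V2 : Set V
  union_eq : V1 ∪ V2 = Set.univ
  inter_empty : V1 ∩ V2 = ∅
  E : V → V → Prop
  edges_ok : ∀ v w, E v w → (v ∈ V1 ∧ w ∈ V2) ∨ (v ∈ V2 ∧ w ∈ V1)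
  v0 : V
  val : V → Set AP
  val_finite : ∀ v, (val v).Finite

namespace Arena

/-- A finite play: a nonempty finite path starting at `v0`. -/
def IsFinPlay (G : Arena V AP) (ρ : List V) : Prop :=
  ρ ≠ [] ∧ ρ.head? = some G.v0 ∧ ρ.Chain' G.E

/-- An infinite play: an infinite path starting at `v0`. -/
def IsInfPlay (G : Arena V AP) (π : ℕ → V) : Prop :=
  π 0 = G.v0 ∧ ∀ i, G.E (π i) (π (i + 1))

/-- The set of all infinite plays `Plays_ω`. -/
def PlaysInf (G : Arena V AP) : Set (ℕ → V) := {π | G.IsInfPlay π}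

end Arena

/-- The prefix `π[0,i]` of an infinite play. -/
def pref (π : ℕ → V) (i : ℕ) : List V := (List.range (i + 1)).map π

/-- RLTL formulas: `φ ::= p | ¬φ | φ∧ψ | ○φ | φ U ψ | R φ`. -/
inductive RLTL (AP : Type) : Type
  | atom : AP → RLTL AP
  | neg : RLTL AP → RLTL AP
  | and : RLTL AP → RLTL AP → RLTL AP
  | next : RLTL AP → RLTL AP
  | untl : RLTL AP → RLTL AP → RLTL AP
  | R : RLTL AP → RLTL AP

namespace RLTL

def or (φ ψ : RLTL AP) : RLTL AP := .neg (.and (.neg φ) (.neg ψ))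

def imp (φ ψ : RLTL AP) : RLTL AP := RLTL.or (.neg φ) ψ

/-- A tautology (built from the atom `p`). -/
def top (p : AP) : RLTL AP := RLTL.or (.atom p) (.neg (.atom p))

def bot (p : AP) : RLTL AP := .neg (RLTL.top p)

/-- The derived `always` operator `G φ := ¬(⊤ U ¬φ)`. -/
def always (p : AP) (φ : RLTL AP) : RLTL AP := .neg (.untl (RLTL.top p) (.neg φ))

/-- Finite disjunction. -/
def bigOr (p : AP) (l : List (RLTL AP)) : RLTL AP := l.foldr RLTL.or (RLTL.bot p)

/-- A formula has no occurrence of the modality `R` (R-depth 0, pure LTL). -/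
def RFree : RLTL AP → Prop
  | .atom _ => True
  | .neg φ => RFree φ
  | .and φ ψ => RFree φ ∧ RFree ψ
  | .next φ => RFree φ
  | .untl φ ψ => RFree φ ∧ RFree ψ
  | .R _ => False

end RLTL

/-- Satisfaction `U, π, i ⊨ φ` of an RLTL formula over the arena `G`, with
binary relation `rel` between finite plays, in the universe `U`. -/
def sat (G : Arena V AP) (rel : List V → List V → Prop) (U : Set (ℕ → V)) :
    RLTL AP → (ℕ → V) → ℕ → Prop
  | .atom p, π, i => p ∈ G.val (π i)
  | .neg φ, π, i => ¬ sat G rel U φ π i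
  | .and φ ψ, π, i => sat G rel U φ π i ∧ sat G rel U ψ π i
  | .next φ, π, i => sat G rel U φ π (i + 1)
  | .untl φ ψ, π, i =>
      ∃ j, i ≤ j ∧ sat G rel U ψ π j ∧ ∀ k, i ≤ k → k < j → sat G rel U φ π k
  | .R φ, π, i => ∀ π' ∈ U, ∀ j : ℕ, rel (pref π i) (pref π' j) → sat G rel U φ π' j

/-- A strategy for Player 1: a partial function from finite plays ending in `V1`
to next positions along an edge. -/
structure Strategy1 (G : Arena V AP) where
  act : List V → Option V
  act_ok : ∀ ρ v, act ρ = some v →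
    G.IsFinPlay ρ ∧ ∃ w, ρ.getLast? = some w ∧ w ∈ G.V1 ∧ G.E w v

/-- The outcome of a strategy: the set of infinite plays induced by it. -/
def Strategy1.out {G : Arena V AP} (σ : Strategy1 G) : Set (ℕ → V) :=
  {π | G.IsInfPlay π ∧ ∀ i, π i ∈ G.V1 → σ.act (pref π i) = some (π (i + 1))}

/-- `(rel,φ)`-strictly-uniform strategy. -/
def StrictlyUniform {G : Arena V AP} (rel : List V → List V → Prop)
    (φ : RLTL AP) (σ : Strategy1 G) : Prop :=
  ∀ π ∈ σ.out, sat G rel σ.out φ π 0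

/-- `(rel,φ)`-fully-uniform strategy. -/
def FullyUniform {G : Arena V AP} (rel : List V → List V → Prop)
    (φ : RLTL AP) (σ : Strategy1 G) : Prop :=
  ∀ π ∈ σ.out, sat G rel G.PlaysInf φ π 0

/-- Positions of an imperfect-information arena: Player 1 positions `v` and
Player 2 positions `(v, a)` for an action `a`. -/
abbrev GPos (Q Act : Type) := Q ⊕ Q × Act

/-- An imperfect-information arena `(𝒢, ∼)`: Player 1 positions are of the form
`v`, Player 2 positions of the form `(v,a)`, `v E (v',a)` implies `v = v'`,
`v₀ ∈ V₁`, and `∼` is an equivalence relation on Player 1 positions. -/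
structure ImpArena (Q Act AP : Type) where
  G : Arena (GPos Q Act) AP
  V1_def : G.V1 = Set.range Sum.inl
  V2_def : G.V2 = Set.range Sum.inr
  v0_P1 : ∃ q : Q, G.v0 = Sum.inl q
  edge_act : ∀ (v v' : Q) (a : Act), G.E (Sum.inl v) (Sum.inr (v', a)) → v = v'
  sim : Q → Q → Prop
  sim_equiv : Equivalence sim

variable {Q Act : Type}

/-- Componentwise relation on positions: Player 1 positions are related iff they
are `∼`-equivalent; Player 2 positions are related iff they carry the same action. -/
def posSim (M : ImpArena Q Act AP) : GPos Q Act → GPos Q Act → Prop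
  | Sum.inl v, Sum.inl v' => M.sim v v'
  | Sum.inr (_, a), Sum.inr (_, a') => a = a'
  | _, _ => False

/-- The extension `≈` of `∼` to finite plays: plays of the same length, related
componentwise. -/
def playEquiv (M : ImpArena Q Act AP) (ρ ρ' : List (GPos Q Act)) : Prop :=
  List.Forall₂ (posSim M) ρ ρ'

/-- Bob's information set after a finite play `ρ`: the set of last positions of
finite plays `≈`-equivalent to `ρ`. -/
def infoSet {Q Act : Type} (M : ImpArena Q Act AP) (ρ : List (GPos Q Act)) :
    Set (GPos Q Act) :=
  {v | ∃ ρ', M.G.IsFinPlay ρ' ∧ playEquiv M ρ ρ' ∧ ρ'.getLast? = some v}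

/-- A strategy for Player 2 (Alice): a partial function from finite plays ending in
`V2` to next positions along an edge. -/
structure Strategy2 (G : Arena V AP) where
  act : List V → Option V
  act_ok : ∀ ρ v, act ρ = some v →
    G.IsFinPlay ρ ∧ ∃ w, ρ.getLast? = some w ∧ w ∈ G.V2 ∧ G.E w v

/-- The outcome of a Player 2 strategy. -/
def Strategy2.out {G : Arena V AP} (σ : Strategy2 G) : Set (ℕ → V) :=
  {π | G.IsInfPlay π ∧ ∀ i, π i ∈ G.V2 → σ.act (pref π i) = some (π (i + 1))}

/-- `(rel,φ)`-fully-uniform strategy for Player 2. -/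
def FullyUniform2 {G : Arena V AP} (rel : List V → List V → Prop)
    (φ : RLTL AP) (σ : Strategy2 G) : Prop :=
  ∀ π ∈ σ.out, sat G rel G.PlaysInf φ π 0

/-- An infinite play is winning for Alice if no finite prefix `ρ` with
`last(ρ) ∈ V₁` satisfies `I(ρ) ⊆ S`. -/
def WinningForAlice {Q Act : Type} (M : ImpArena Q Act AP) (S : Set Q)
    (π : ℕ → GPos Q Act) : Prop :=
  ¬ ∃ i : ℕ, π i ∈ M.G.V1 ∧ infoSet M (pref π i) ⊆ Sum.inl '' S

theorem pref_length' {V : Type} (π : ℕ → V) (i : ℕ) : (pref π i).length = i + 1 := by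
  simp [pref]

theorem pref_getLast' {V : Type} (π : ℕ → V) (i : ℕ) : (pref π i).getLast? = some (π i) := by
  simp [pref, List.range_succ]

theorem pref_isFinPlay {V AP : Type} (G : Arena V AP) (π : ℕ → V) (h : G.IsInfPlay π) (i : ℕ) :
    G.IsFinPlay (pref π i) := by
  refine ⟨?_, ?_, ?_⟩
  · simp [pref]
  · simp [pref, List.range_succ_eq_map, h.1]
  · have : List.IsChain G.E (pref π i) := by
      rw [List.isChain_iff_getElem]
      intro k hk
      simpa [pref] using h.2 k
    exact this

theorem playEquiv_refl {Q Act AP : Type} (M : ImpArena Q Act AP) (ρ : List (GPos Q Act)) :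
    playEquiv M ρ ρ := by
  unfold playEquiv
  rw [List.forall₂_same]
  rintro (v | ⟨v, a⟩) _
  · exact M.sim_equiv.refl v
  · rfl

theorem sat_R_iff {Q Act AP : Type} (M : ImpArena Q Act AP)
    (S : Set Q) (pS : AP)
    (hval : ∀ v : GPos Q Act, pS ∈ M.G.val v ↔ v ∈ Sum.inl '' S)
    (hext : ∀ ρ, M.G.IsFinPlay ρ →
      ∃ π, M.G.IsInfPlay π ∧ pref π (ρ.length - 1) = ρ)
    (π : ℕ → GPos Q Act) (hπ : M.G.IsInfPlay π) (i : ℕ) :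
    sat M.G (playEquiv M) M.G.PlaysInf (RLTL.R (.atom pS)) π i ↔
      (π i ∈ M.G.V1 ∧ infoSet M (pref π i) ⊆ Sum.inl '' S) := by
  simp only [sat]
  constructor
  · intro h
    refine ⟨?_, ?_⟩
    · obtain ⟨q, _, hq⟩ := (hval _).1 (h π hπ i (playEquiv_refl M _))
      rw [M.V1_def]
      exact ⟨q, hq⟩
    · rintro v ⟨ρ, hρ, he, hl⟩
      obtain ⟨π', hπ', hp⟩ := hext ρ hρ
      have h1 := h π' hπ' (ρ.length - 1) (by rw [hp]; exact he)
      rw [← hp, pref_getLast'] at hl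
      rw [← Option.some.inj hl]
      exact (hval _).1 h1
  · rintro ⟨_, h⟩ π' hπ' j hr
    exact (hval _).2 (h ⟨pref π' j, pref_isFinPlay _ _ hπ' j, hr, pref_getLast' _ _⟩)

/-- In a game with opacity condition with secret set `S ⊆ V₁`
marked by `p_S`, a strategy `σ` for Alice (Player 2) is winning iff `σ` is
`(≈, G ¬ R p_S)`-fully-uniform. -/
theorem winning_iff_fullyUniform_opacity
    {Q Act AP : Type} [Fintype Act] (M : ImpArena Q Act AP)
    (S : Set Q) (pS : AP)
    (hval : ∀ v : GPos Q Act, pS ∈ M.G.val v ↔ v ∈ Sum.inl '' S)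
    (hext : ∀ ρ, M.G.IsFinPlay ρ →
      ∃ π, M.G.IsInfPlay π ∧ pref π (ρ.length - 1) = ρ)
    (σ : Strategy2 M.G) :
    (∀ π ∈ σ.out, WinningForAlice M S π) ↔
      FullyUniform2 (playEquiv M)
        (RLTL.always pS (RLTL.neg (RLTL.R (.atom pS)))) σ := by
  unfold FullyUniform2
  refine forall₂_congr fun π hπ => ?_
  have key := sat_R_iff M S pS hval hext π hπ.1
  unfold WinningForAlice RLTL.always
  show _ ↔ ¬ ∃ j, 0 ≤ j ∧ (¬ ¬ sat M.G (playEquiv M) M.G.PlaysInf (RLTL.R (.atom pS)) π j) ∧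
    ∀ k, 0 ≤ k → k < j → sat M.G (playEquiv M) M.G.PlaysInf (RLTL.top pS) π k
  refine not_congr (exists_congr fun j => ?_)
  rw [not_not, key j]
  constructor
  · intro h
    refine ⟨Nat.zero_le _, h, fun k _ _ => ?_⟩
    simp only [RLTL.top, RLTL.or, sat]
    tauto
  · exact fun h => h.2.1

end UniformStrategies
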